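/- arXiv:2006.06581 — 3 statements merged into one kernel-verified Lean document; each statement's English description precedes it below -/
import Mathlib

section
/- Let 0 < σ < β, and let f : ℝ^n → ℝ be σ-strongly convex and β-smooth (i.e. both f − (σ/2)‖·‖₂² and (β/2)‖·‖₂² − f are convex). Let γ > 0 and a > 0. Then the operator x ↦ a·Prox_{γf}(x) − x is Lipschitz with constant max( a/(1 + γσ) − 1 , 1 − a/(1 + γβ) ): for all x, y ∈ ℝ^n, ‖(a·Prox_{γf}(x) − x) − (a·Prox_{γf}(y) − y)‖₂ ≤ max( a/(1 + γσ) − 1 , 1 − a/(1 + γβ) )·‖x − y‖₂. -/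
/-!
Put `g = γ f + ‖·‖² / 2`. Then `g` is `S`-strongly convex and `B`-smooth with `S = 1 + γ σ` and
`B = 1 + γ β`, and minimality of `Prox_{γf}(z)` says precisely that `z` is a subgradient of `g`
there. Strong convexity and smoothness place `g` between the two quadratics with this slope and
curvatures `S` and `B`. Comparing the quadratics at two prox points shows that `d = P x - P y` and
`e = x - y` satisfy `⟪e - S d, B d - e⟫ ≥ 0`, that is, `d` lies in the ball having the segment from
`e / B` to `e / S` as a diameter. The triangle inequality through the center of that ball bounds
`‖a d - e‖`.
-/

open Set Filter Topology
open scoped RealInnerProductSpace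

lemma le_of_forall_mem_Ioo_le_add_mul {A B C : ℝ} (h : ∀ t ∈ Ioo (0 : ℝ) 1, A ≤ B + t * C) :
    A ≤ B := by
  have hlim : Tendsto (fun t : ℝ => B + t * C) (𝓝[>] 0) (𝓝 B) :=
    tendsto_nhdsWithin_of_tendsto_nhds <| Continuous.tendsto' (by fun_prop) _ _ (by simp)
  exact ge_of_tendsto hlim (eventually_of_mem (Ioo_mem_nhdsGT one_pos) h)

variable {E : Type*} [NormedAddCommGroup E] [InnerProductSpace ℝ E]

section InnerProduct

lemma norm_sub_le_norm_add_of_inner_nonneg {x y : E} (h : 0 ≤ ⟪x, y⟫) : ‖x - y‖ ≤ ‖x + y‖ := by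
  refine le_of_sq_le_sq ?_ (norm_nonneg _)
  rw [norm_sub_sq_real, norm_add_sq_real]
  linarith

lemma norm_sq_le_mul_inner_of_forall_two_mul_inner_le {u d : E} {L : ℝ} (hL : 0 ≤ L)
    (h : ∀ v, 2 * ⟪u, v⟫ ≤ ⟪u, d⟫ + L * ‖v‖ ^ 2) : ‖u‖ ^ 2 ≤ L * ⟪u, d⟫ := by
  refine le_of_forall_mem_Ioo_le_add_mul (C := ⟪u, d⟫) fun t ⟨ht, _⟩ => ?_
  have hLt : 0 < L + t := by positivity
  -- The best test vector is `L⁻¹ • u`; the shift by `t` also covers `L = 0`.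
  have htest := h ((L + t)⁻¹ • u)
  rw [real_inner_smul_right, real_inner_self_eq_norm_sq, norm_smul, mul_pow, Real.norm_eq_abs,
    sq_abs] at htest
  have hquad : L * ((L + t)⁻¹ ^ 2 * ‖u‖ ^ 2) ≤ (L + t)⁻¹ * ‖u‖ ^ 2 := by
    calc L * ((L + t)⁻¹ ^ 2 * ‖u‖ ^ 2) ≤ (L + t) * ((L + t)⁻¹ ^ 2 * ‖u‖ ^ 2) := by
          gcongr; exact le_add_of_nonneg_right ht.le
      _ = (L + t)⁻¹ * ‖u‖ ^ 2 := by field_simp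
  have hbound : (L + t)⁻¹ * ‖u‖ ^ 2 ≤ ⟪u, d⟫ := by linarith
  rw [inv_mul_le_iff₀ hLt] at hbound
  linarith

lemma norm_smul_sub_le_of_inner_nonneg {d e : E} {S B a : ℝ} (hS : 0 < S) (hSB : S ≤ B)
    (ha : 0 ≤ a) (h : 0 ≤ ⟪e - S • d, B • d - e⟫) :
    ‖a • d - e‖ ≤ max (a / S - 1) (1 - a / B) * ‖e‖ := by
  have hB : 0 < B := hS.trans_le hSB
  have hball : ‖(a / S + a / B) • e - (2 * a) • d‖ ≤ (a / S - a / B) * ‖e‖ := by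
    have hscaled : 0 ≤ ⟪(a / S) • (e - S • d), (a / B) • (B • d - e)⟫ := by
      rw [real_inner_smul_left, real_inner_smul_right]
      positivity
    have hnorm := norm_sub_le_norm_add_of_inner_nonneg hscaled
    have hsub : (a / S) • (e - S • d) - (a / B) • (B • d - e)
        = (a / S + a / B) • e - (2 * a) • d := by
      match_scalars <;> field_simp <;> ring
    have hadd : (a / S) • (e - S • d) + (a / B) • (B • d - e) = (a / S - a / B) • e := by
      match_scalars <;> field_simp <;> ring
    have hnonneg : 0 ≤ a / S - a / B := sub_nonneg.2 (div_le_div_of_nonneg_left ha hS hSB)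
    rwa [hsub, hadd, norm_smul, Real.norm_of_nonneg hnonneg] at hnorm
  have hsplit : (2 : ℝ) • (a • d - e)
      = (a / S + a / B - 2) • e - ((a / S + a / B) • e - (2 * a) • d) := by module
  have htriangle : 2 * ‖a • d - e‖
      ≤ |a / S + a / B - 2| * ‖e‖ + ‖(a / S + a / B) • e - (2 * a) • d‖ := by
    calc 2 * ‖a • d - e‖ = ‖(2 : ℝ) • (a • d - e)‖ := by rw [norm_smul, Real.norm_two]
      _ ≤ _ := by
        rw [hsplit, ← Real.norm_eq_abs, ← norm_smul]
        exact norm_sub_le _ _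
  have hmax : 2 * max (a / S - 1) (1 - a / B) = |a / S + a / B - 2| + (a / S - a / B) := by
    have habs : |a / S - 1 - (1 - a / B)| = |a / S + a / B - 2| := by ring_nf
    linarith [max_add_min (a / S - 1) (1 - a / B), max_sub_min_eq_abs' (a / S - 1) (1 - a / B)]
  linear_combination (1 / 2) * htriangle + (1 / 2) * hball - (1 / 2) * ‖e‖ * hmax

end InnerProduct

/-- `z` is a subgradient at `p` of the everywhere finite function `g` on a real inner product
space, the dual vector being represented by `z` through the inner product. Minimality of a proximal
point is expressed in these terms. -/
def IsSubgradientAt (g : E → ℝ) (z p : E) : Prop :=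
  ∀ w, g p + ⟪z, w - p⟫ ≤ g w

namespace IsSubgradientAt

variable {g : E → ℝ} {z p x y q : E} {m S B : ℝ}

lemma add_norm_sq_le (hz : IsSubgradientAt g z p) (hg : StrongConvexOn univ m g) (w : E) :
    g p + ⟪z, w - p⟫ + m / 2 * ‖w - p‖ ^ 2 ≤ g w := by
  refine le_of_forall_mem_Ioo_le_add_mul (C := m / 2 * ‖w - p‖ ^ 2) fun t ⟨ht, ht1⟩ => ?_
  have hbelow := hz (p + t • (w - p))
  have habove := hg.2 (mem_univ p) (mem_univ w) (sub_nonneg.2 ht1.le) ht.le (sub_add_cancel 1 t)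
  rw [show (1 - t) • p + t • w = p + t • (w - p) by module, norm_sub_rev, smul_eq_mul,
    smul_eq_mul] at habove
  rw [add_sub_cancel_left, real_inner_smul_right] at hbelow
  refine le_of_mul_le_mul_left ?_ ht
  linear_combination hbelow + habove

lemma le_sub_norm_sq (hz : IsSubgradientAt g z p) (hg : StrongConcaveOn univ m g) (w : E) :
    g w ≤ g p + ⟪z, w - p⟫ - m / 2 * ‖w - p‖ ^ 2 := by
  refine le_of_forall_mem_Ioo_le_add_mul (C := -(m / 2 * ‖w - p‖ ^ 2)) fun t ⟨ht, _⟩ => ?_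
  -- `p` divides the segment from `w` to `p - t • (w - p)` in the ratio `1 : t`.
  have hbelow := hz (p - t • (w - p))
  rw [sub_sub_cancel_left, inner_neg_right, real_inner_smul_right] at hbelow
  have hconcave := hg.2 (mem_univ w) (mem_univ (p - t • (w - p)))
    (show 0 ≤ t / (1 + t) by positivity) (show 0 ≤ 1 / (1 + t) by positivity) (by field_simp; ring)
  have hpoint : (t / (1 + t)) • w + (1 / (1 + t)) • (p - t • (w - p)) = p := by
    match_scalars <;> field_simp <;> ring
  have hlength : ‖w - (p - t • (w - p))‖ = (1 + t) * ‖w - p‖ := by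
    rw [show w - (p - t • (w - p)) = (1 + t) • (w - p) by module, norm_smul,
      Real.norm_of_nonneg (by positivity)]
  rw [hpoint, hlength, smul_eq_mul, smul_eq_mul] at hconcave
  have hcleared : t * g w + g (p - t • (w - p)) + t * (1 + t) * (m / 2 * ‖w - p‖ ^ 2)
      ≤ (1 + t) * g p := by
    calc t * g w + g (p - t • (w - p)) + t * (1 + t) * (m / 2 * ‖w - p‖ ^ 2)
        = (1 + t) * (t / (1 + t) * g w + 1 / (1 + t) * g (p - t • (w - p))
            + t / (1 + t) * (1 / (1 + t)) * (m / 2 * ((1 + t) * ‖w - p‖) ^ 2)) := by field_simp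
      _ ≤ (1 + t) * g p := by gcongr
  refine le_of_mul_le_mul_left ?_ ht
  linear_combination hbelow + hcleared

lemma two_mul_inner_le (hx : IsSubgradientAt g x p) (hy : IsSubgradientAt g y q)
    (hconvex : StrongConvexOn univ S g) (hsmooth : StrongConcaveOn univ (-B) g) (v : E) :
    2 * ⟪(x - y) - S • (p - q), v⟫
      ≤ ⟪(x - y) - S • (p - q), p - q⟫ + (B - S) * ‖v‖ ^ 2 := by
  have hq := (hx.add_norm_sq_le hconvex (q + v)).trans (hy.le_sub_norm_sq hsmooth (q + v))
  have hp := (hy.add_norm_sq_le hconvex (p - v)).trans (hx.le_sub_norm_sq hsmooth (p - v))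
  rw [show q + v - p = v - (p - q) by abel, add_sub_cancel_left] at hq
  rw [show p - v - q = -(v - (p - q)) by abel, sub_sub_cancel_left] at hp
  generalize p - q = d at hp hq ⊢
  simp only [inner_sub_left, inner_sub_right, inner_neg_right, real_inner_smul_left, norm_neg,
    norm_sub_sq_real, real_inner_self_eq_norm_sq, real_inner_comm d v] at hp hq ⊢
  linarith

lemma inner_sub_smul_smul_sub_nonneg (hx : IsSubgradientAt g x p) (hy : IsSubgradientAt g y q)
    (hconvex : StrongConvexOn univ S g) (hsmooth : StrongConcaveOn univ (-B) g) (hSB : S ≤ B) :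
    0 ≤ ⟪(x - y) - S • (p - q), B • (p - q) - (x - y)⟫ := by
  have hcoercive := norm_sq_le_mul_inner_of_forall_two_mul_inner_le (sub_nonneg.2 hSB)
    (hx.two_mul_inner_le hy hconvex hsmooth)
  have hright : B • (p - q) - (x - y) = (B - S) • (p - q) - ((x - y) - S • (p - q)) := by module
  rw [hright, inner_sub_right, real_inner_smul_right, real_inner_self_eq_norm_sq]
  linarith

lemma of_forall_add_norm_sub_sq_le {φ : E → ℝ}
    (hp : ∀ w, φ p + ‖p - z‖ ^ 2 / 2 ≤ φ w + ‖w - z‖ ^ 2 / 2) :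
    IsSubgradientAt (fun w => φ w + ‖w‖ ^ 2 / 2) z p := by
  intro w
  have hmin := hp w
  rw [norm_sub_sq_real, norm_sub_sq_real] at hmin
  rw [inner_sub_right, real_inner_comm, real_inner_comm p]
  linarith

end IsSubgradientAt

section ProximalObjective

variable {s : Set E} {f : E → ℝ} {σ β γ : ℝ}

lemma strongConcaveOn_neg_iff_convexOn :
    StrongConcaveOn s (-β) f ↔ ConvexOn ℝ s fun x => β / 2 * ‖x‖ ^ 2 - f x := by
  rw [strongConcaveOn_iff_convex, ← neg_convexOn_iff]
  congr! 2 with x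
  simp only [Pi.neg_apply]
  ring

lemma strongConvexOn_mul_add_norm_sq_div_two (hγ : 0 ≤ γ) (hf : StrongConvexOn s σ f) :
    StrongConvexOn s (1 + γ * σ) fun x => γ * f x + ‖x‖ ^ 2 / 2 := by
  rw [strongConvexOn_iff_convex] at hf ⊢
  refine (hf.smul hγ).congr fun x _ => ?_
  simp only [smul_eq_mul]
  ring

lemma strongConcaveOn_mul_add_norm_sq_div_two (hγ : 0 ≤ γ) (hf : StrongConcaveOn s (-β) f) :
    StrongConcaveOn s (-(1 + γ * β)) fun x => γ * f x + ‖x‖ ^ 2 / 2 := by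
  rw [strongConcaveOn_neg_iff_convexOn] at hf ⊢
  refine (hf.smul hγ).congr fun x _ => ?_
  simp only [smul_eq_mul]
  ring

end ProximalObjective

theorem prox_scaled_sub_id_lipschitz_strongly_convex_smooth_general {f : E → ℝ} {P : E → E}
    {σ β γ a : ℝ} (hconvex : StrongConvexOn univ σ f) (hsmooth : StrongConcaveOn univ (-β) f)
    (hγ : 0 ≤ γ) (hγσ : 0 < 1 + γ * σ) (hσβ : σ ≤ β) (ha : 0 ≤ a)
    (hP : ∀ z x, γ * f (P z) + ‖P z - z‖ ^ 2 / 2 ≤ γ * f x + ‖x - z‖ ^ 2 / 2) (x y : E) :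
    ‖(a • P x - x) - (a • P y - y)‖
      ≤ max (a / (1 + γ * σ) - 1) (1 - a / (1 + γ * β)) * ‖x - y‖ := by
  have hsub (z : E) : IsSubgradientAt (fun w => γ * f w + ‖w‖ ^ 2 / 2) z (P z) :=
    .of_forall_add_norm_sub_sq_le (φ := fun w => γ * f w) (hP z)
  have hSB : 1 + γ * σ ≤ 1 + γ * β := by gcongr
  have hinner := (hsub x).inner_sub_smul_smul_sub_nonneg (hsub y)
    (strongConvexOn_mul_add_norm_sq_div_two hγ hconvex)
    (strongConcaveOn_mul_add_norm_sq_div_two hγ hsmooth) hSB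
  rw [sub_sub_sub_comm, ← smul_sub]
  exact norm_smul_sub_le_of_inner_nonneg hγσ hSB ha hinner

/-- For `0 < σ < β` and `f : ℝⁿ → ℝ` which is `σ`-strongly convex and
`β`-smooth, `γ > 0` and `a > 0`, the operator `x ↦ a·Prox_{γf}(x) − x` is Lipschitz with
constant `max(a/(1 + γσ) − 1, 1 − a/(1 + γβ))`. Here `P` is hypothesized to be the proximal
operator of `γf`, i.e. `P z` minimizes `x ↦ γ f x + ‖x − z‖²/2`. -/
theorem prox_scaled_sub_id_lipschitz_strongly_convex_smooth
    (n : ℕ) (σ β : ℝ) (hσ : 0 < σ) (hσβ : σ < β)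
    (f : EuclideanSpace ℝ (Fin n) → ℝ)
    (hstrong : ConvexOn ℝ Set.univ (fun x => f x - σ / 2 * ‖x‖ ^ 2))
    (hsmooth : ConvexOn ℝ Set.univ (fun x => β / 2 * ‖x‖ ^ 2 - f x))
    (γ a : ℝ) (hγ : 0 < γ) (ha : 0 < a)
    (P : EuclideanSpace ℝ (Fin n) → EuclideanSpace ℝ (Fin n))
    (hP : ∀ z x : EuclideanSpace ℝ (Fin n),
      γ * f (P z) + ‖P z - z‖ ^ 2 / 2 ≤ γ * f x + ‖x - z‖ ^ 2 / 2) :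
    ∀ x y : EuclideanSpace ℝ (Fin n),
      ‖(a • P x - x) - (a • P y - y)‖
        ≤ max (a / (1 + γ * σ) - 1) (1 - a / (1 + γ * β)) * ‖x - y‖ := by
  exact prox_scaled_sub_id_lipschitz_strongly_convex_smooth_general
    (strongConvexOn_iff_convex.2 hstrong) (strongConcaveOn_neg_iff_convexOn.2 hsmooth)
    hγ.le (by positivity) hσβ.le ha.le hP
end

section
/- Let M ≥ 1, let S ∈ ℝ^{M×M} be symmetric positive semidefinite with smallest and largest eigenvalues λ_min(S) and λ_max(S), let α, β ∈ ℝ, and let q ≥ 0, a > 0. Then q·S + a·I is invertible and the ℓ₂ operator norm of (α·S + β·I)·(q·S + a·I)⁻¹ equals max( |α·λ_min(S) + β| / (q·λ_min(S) + a) , |α·λ_max(S) + β| / (q·λ_max(S) + a) ). -/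
open Matrix

/-- The ℓ₂ (Euclidean) operator norm of a real matrix. -/
noncomputable def l2OpNorm {m n : ℕ} (W : Matrix (Fin m) (Fin n) ℝ) : ℝ :=
  ‖LinearMap.toContinuousLinearMap (Matrix.toEuclideanLin W)‖

/-!
In the continuous functional calculus of a self-adjoint element `s`, the product
`(α • s + β • 1) * (q • s + a • 1)⁻¹` is `f(s)` for `f x = (α x + β) / (q x + a)`, so its norm is
the maximum of `|f|` over the spectrum. Where the denominator is positive, `|f x| ≤ r` reads
`|α x + β| - r (q x + a) ≤ 0`, which for `r ≥ 0` cuts out a sublevel set of a convex function.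
Hence `|f|` is quasiconvex and its maximum is attained at an extreme point of the spectrum.
-/

section Quasiconvex

variable {𝕜 E : Type*} [Field 𝕜] [LinearOrder 𝕜] [IsStrictOrderedRing 𝕜]

theorem quasiconvexOn_abs_div [AddCommGroup E] [Module 𝕜 E] {s : Set E} {f g : E → 𝕜}
    (hf : ConvexOn 𝕜 s fun x ↦ |f x|) (hg : ConcaveOn 𝕜 s g) (hg_pos : ∀ x ∈ s, 0 < g x) :
    QuasiconvexOn 𝕜 s fun x ↦ |f x / g x| := by
  intro r
  rcases lt_or_ge r 0 with hr | hr
  · have sublevel_eq_empty : {x ∈ s | |f x / g x| ≤ r} = ∅ :=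
      Set.eq_empty_of_forall_notMem fun _ hx ↦ (hr.trans_le (abs_nonneg _)).not_ge hx.2
    rw [sublevel_eq_empty]
    exact convex_empty
  · have sublevel_eq : {x ∈ s | |f x / g x| ≤ r} = {x ∈ s | |f x| - r • g x ≤ 0} := by
      ext x
      refine and_congr_right fun hx ↦ ?_
      rw [abs_div, abs_of_pos (hg_pos x hx), div_le_iff₀ (hg_pos x hx), smul_eq_mul, sub_nonpos]
    rw [sublevel_eq]
    exact (hf.sub (hg.smul hr)).convex_le 0

theorem convexOn_affine (α β : 𝕜) {s : Set 𝕜} (hs : Convex 𝕜 s) :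
    ConvexOn 𝕜 s fun x ↦ α * x + β :=
  ((LinearMap.mul 𝕜 𝕜 α).convexOn hs).add_const β

theorem concaveOn_affine (α β : 𝕜) {s : Set 𝕜} (hs : Convex 𝕜 s) :
    ConcaveOn 𝕜 s fun x ↦ α * x + β :=
  ((LinearMap.mul 𝕜 𝕜 α).concaveOn hs).add_const β

theorem convexOn_abs_affine (α β : 𝕜) {s : Set 𝕜} (hs : Convex 𝕜 s) :
    ConvexOn 𝕜 s fun x ↦ |α * x + β| :=
  (convexOn_affine α β hs).sup (concaveOn_affine α β hs).neg

theorem affine_pos_of_mem_Icc {q a l u x : 𝕜} (hl : 0 < q * l + a) (hu : 0 < q * u + a)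
    (hx : x ∈ Set.Icc l u) : 0 < q * x + a :=
  have hlu : l ≤ u := hx.1.trans hx.2
  (((concaveOn_affine q a (convex_Icc l u)).convex_gt 0).ordConnected.out
    ⟨Set.left_mem_Icc.2 hlu, hl⟩ ⟨Set.right_mem_Icc.2 hlu, hu⟩ hx).2

theorem quasiconvexOn_abs_affine_div_affine (α β : 𝕜) {q a l u : 𝕜}
    (hl : 0 < q * l + a) (hu : 0 < q * u + a) :
    QuasiconvexOn 𝕜 (Set.Icc l u) fun x ↦ |(α * x + β) / (q * x + a)| :=
  quasiconvexOn_abs_div (convexOn_abs_affine α β (convex_Icc l u))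
    (concaveOn_affine q a (convex_Icc l u)) fun _ ↦ affine_pos_of_mem_Icc hl hu

end Quasiconvex

section FunctionalCalculus

open scoped Ring

theorem cfc_affine {R A : Type*} {p : A → Prop} [CommSemiring R] [StarRing R] [MetricSpace R]
    [IsTopologicalSemiring R] [ContinuousStar R] [TopologicalSpace A] [Ring A] [StarRing A]
    [Algebra R A] [ContinuousFunctionalCalculus R A p] (α β : R) {s : A} (hs : p s) :
    cfc (fun x ↦ α * x + β) s = α • s + β • 1 := by
  rw [cfc_add_const β (α * ·) s, cfc_const_mul_id α s, Algebra.algebraMap_eq_smul_one]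

variable {A : Type*} [NormedRing A] [StarRing A] [NormedAlgebra ℝ A]
  [IsometricContinuousFunctionalCalculus ℝ A IsSelfAdjoint]

theorem norm_cfc_eq_max_of_quasiconvexOn {s : A} (hs : IsSelfAdjoint s) {l u : ℝ}
    (hl : IsLeast (spectrum ℝ s) l) (hu : IsGreatest (spectrum ℝ s) u) {f : ℝ → ℝ}
    (hf : ContinuousOn f (spectrum ℝ s)) (hfq : QuasiconvexOn ℝ (Set.Icc l u) fun x ↦ |f x|) :
    ‖cfc f s‖ = max |f l| |f u| := by
  have hlu : l ≤ u := hl.2 hu.1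
  refine le_antisymm (norm_cfc_le (le_max_of_le_left (abs_nonneg _)) fun x hx ↦ ?_)
    (max_le (norm_apply_le_norm_cfc f s hl.1) (norm_apply_le_norm_cfc f s hu.1))
  exact ((hfq _).ordConnected.out ⟨Set.left_mem_Icc.2 hlu, le_max_left _ _⟩
    ⟨Set.right_mem_Icc.2 hlu, le_max_right _ _⟩ ⟨hl.2 hx, hu.2 hx⟩).2

theorem opNorm_rational_function_of_psd_general {s : A} (hs : IsSelfAdjoint s) (α β : ℝ)
    {q a l u : ℝ} (hl : IsLeast (spectrum ℝ s) l) (hu : IsGreatest (spectrum ℝ s) u)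
    (hl_pos : 0 < q * l + a) (hu_pos : 0 < q * u + a) :
    IsUnit (q • s + a • 1) ∧
      ‖(α • s + β • 1) * (q • s + a • 1)⁻¹ʳ‖
        = max (|α * l + β| / (q * l + a)) (|α * u + β| / (q * u + a)) := by
  have denom_ne_zero : ∀ x ∈ spectrum ℝ s, q * x + a ≠ 0 := fun x hx ↦
    (affine_pos_of_mem_Icc hl_pos hu_pos ⟨hl.2 hx, hu.2 hx⟩).ne'
  have continuousOn_div : ContinuousOn (fun x ↦ (α * x + β) / (q * x + a)) (spectrum ℝ s) := by
    fun_prop (disch := exact denom_ne_zero)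
  rw [← cfc_affine α β hs, ← cfc_affine q a hs]
  refine ⟨(isUnit_cfc_iff _ s).2 denom_ne_zero, ?_⟩
  rw [← cfc_map_div _ _ s denom_ne_zero, norm_cfc_eq_max_of_quasiconvexOn hs hl hu continuousOn_div
    (quasiconvexOn_abs_affine_div_affine α β hl_pos hu_pos)]
  simp only [abs_div, abs_of_pos hl_pos, abs_of_pos hu_pos]

end FunctionalCalculus

section Matrix

theorem spectrum_eq_setOf_exists_mulVec_eq_smul {K n : Type*} [Field K] [Fintype n] [DecidableEq n]
    (S : Matrix n n K) : spectrum K S = {μ | ∃ v : n → K, v ≠ 0 ∧ S *ᵥ v = μ • v} := by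
  ext μ
  rw [← spectrum_toLin', ← Module.End.hasEigenvalue_iff_mem_spectrum]
  constructor
  · intro hμ
    obtain ⟨v, hv⟩ := hμ.exists_hasEigenvector
    exact ⟨v, hv.2, hv.apply_eq_smul⟩
  · rintro ⟨v, hv, hSv⟩
    exact Module.End.hasEigenvalue_of_hasEigenvector
      ⟨Module.End.mem_eigenspace_iff.2 hSv, hv⟩

open scoped Matrix.Norms.L2Operator in
theorem l2OpNorm_eq_l2_opNorm {m n : ℕ} (W : Matrix (Fin m) (Fin n) ℝ) : l2OpNorm W = ‖W‖ :=
  rfl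

end Matrix

/-- For symmetric positive semidefinite `S ∈ ℝ^{M×M}` (`M ≥ 1`) with smallest
and largest eigenvalues `lmin`, `lmax`, reals `α, β`, `q ≥ 0` and `a > 0`, the matrix
`q•S + a•I` is invertible and the ℓ₂ operator norm of `(α•S + β•I)(q•S + a•I)⁻¹` equals
`max(|α·lmin + β|/(q·lmin + a), |α·lmax + β|/(q·lmax + a))`. -/
theorem opNorm_rational_function_of_psd
    (M : ℕ) (hM : 1 ≤ M) (S : Matrix (Fin M) (Fin M) ℝ)
    (hsymm : S.IsSymm)
    (hpsd : ∀ v : Fin M → ℝ, 0 ≤ v ⬝ᵥ S.mulVec v)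
    (α β q a : ℝ) (hq : 0 ≤ q) (ha : 0 < a) (lmin lmax : ℝ)
    (hmin : IsLeast {μ : ℝ | ∃ v : Fin M → ℝ, v ≠ 0 ∧ S.mulVec v = μ • v} lmin)
    (hmax : IsGreatest {μ : ℝ | ∃ v : Fin M → ℝ, v ≠ 0 ∧ S.mulVec v = μ • v} lmax) :
    IsUnit (q • S + a • (1 : Matrix (Fin M) (Fin M) ℝ)) ∧
    l2OpNorm ((α • S + β • (1 : Matrix (Fin M) (Fin M) ℝ)) *
        (q • S + a • (1 : Matrix (Fin M) (Fin M) ℝ))⁻¹)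
      = max (|α * lmin + β| / (q * lmin + a)) (|α * lmax + β| / (q * lmax + a)) := by
  have hS : S.PosSemidef := .of_dotProduct_mulVec_nonneg hsymm hpsd
  rw [← spectrum_eq_setOf_exists_mulVec_eq_smul] at hmin hmax
  have lmin_nonneg : 0 ≤ lmin :=
    (posSemidef_iff_isHermitian_and_spectrum_nonneg.1 hS).2 hmin.1
  have lmax_nonneg : 0 ≤ lmax := lmin_nonneg.trans (hmin.2 hmax.1)
  rw [l2OpNorm_eq_l2_opNorm, nonsing_inv_eq_ringInverse]
  open scoped Matrix.Norms.L2Operator in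
  exact opNorm_rational_function_of_psd_general hS.isHermitian.isSelfAdjoint α β hmin hmax
    (by positivity) (by positivity)
end

section
/- Let y ∈ {−1, +1}, γ > 0, and let f : ℝ → ℝ be the logistic loss f(x) = log(1 + exp(−y·x)). Then: (i) for every p ∈ ℝ, x = Prox_{f/γ}(p) is the unique real solution of the fixed-point equation x = p + y / (γ·(1 + exp(y·x))); and (ii) the map Prox_{f/γ} is differentiable on ℝ with derivative (Prox_{f/γ})′(p) = 1 / (1 + (1/γ)·1/(2 + 2·cosh(Prox_{f/γ}(p)))). -/
/-!
A proximal point `x` of a differentiable convex `φ` at `p` solves `x + ∇φ(x) = p`. As `∇φ` is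
monotone, `x ↦ x + ∇φ(x)` does not decrease distances, so the solution is unique and depends
continuously on `p`; in one dimension the derivative of the inverse map is then `1 / (1 + φ''(x))`.
For `φ = f / γ` with `f` the logistic loss, `φ'` and `φ''` are expressed by the sigmoid `σ`, and
`σ(t) (1 - σ(t)) = 1 / (2 + 2 cosh t)`.
-/

open Real Set

open scoped RealInnerProductSpace

section InnerProductSpace

variable {E : Type*} [NormedAddCommGroup E] [InnerProductSpace ℝ E]

/-- Monotone operators in the sense of convex analysis, such as gradients of convex functions. -/
def IsMonotoneOperator (g : E → E) : Prop :=
  ∀ a b, 0 ≤ ⟪g a - g b, a - b⟫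

/-- `P` is a proximal operator of `φ`: it selects, for each `p`, a (possibly non-unique) minimizer
of `φ` penalized by half the squared distance to `p`. The step size is absorbed into `φ`. -/
def IsProximalMap (φ : E → ℝ) (P : E → E) : Prop :=
  ∀ p, IsMinOn (fun x ↦ φ x + ‖x - p‖ ^ 2 / 2) univ (P p)

theorem IsMonotoneOperator.antilipschitzWith_id_add {g : E → E} (hg : IsMonotoneOperator g) :
    AntilipschitzWith 1 fun x ↦ x + g x := by
  refine AntilipschitzWith.of_le_mul_dist fun a b ↦ ?_
  rw [NNReal.coe_one, one_mul, dist_eq_norm, dist_eq_norm]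
  have norm_mul_self_le : ‖a - b‖ * ‖a - b‖ ≤ ‖a + g a - (b + g b)‖ * ‖a - b‖ :=
    calc ‖a - b‖ * ‖a - b‖
        ≤ ⟪a - b, a - b⟫ + ⟪g a - g b, a - b⟫ := by
          rw [real_inner_self_eq_norm_mul_norm]
          exact le_add_of_nonneg_right (hg a b)
      _ = ⟪a + g a - (b + g b), a - b⟫ := by rw [← inner_add_left, add_sub_add_comm]
      _ ≤ ‖a + g a - (b + g b)‖ * ‖a - b‖ := real_inner_le_norm _ _
  rcases (norm_nonneg (a - b)).eq_or_lt with zero_eq_norm | norm_pos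
  · exact zero_eq_norm ▸ norm_nonneg _
  · exact le_of_mul_le_mul_right norm_mul_self_le norm_pos

variable [CompleteSpace E]

theorem hasGradientAt_norm_sub_sq_div_two (p x : E) :
    HasGradientAt (fun z ↦ ‖z - p‖ ^ 2 / 2) (x - p) x := by
  rw [hasGradientAt_iff_hasFDerivAt]
  refine (((hasFDerivAt_id x).sub_const p).norm_sq.mul_const (2⁻¹ : ℝ)).congr_fderiv ?_
  ext v
  simp

namespace IsProximalMap

variable {φ : E → ℝ} {g P : E → E}

theorem add_gradient_eq {p v : E} (hP : IsProximalMap φ P) (hφ : HasGradientAt φ v (P p)) :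
    P p + v = p := by
  have deriv_eq_zero := ((hP p).isLocalMin Filter.univ_mem).hasFDerivAt_eq_zero
    (hφ.hasFDerivAt.add (hasGradientAt_norm_sub_sq_div_two p (P p)).hasFDerivAt)
  rw [← map_add, LinearIsometryEquiv.map_eq_zero_iff] at deriv_eq_zero
  rw [← sub_eq_zero, ← deriv_eq_zero]
  abel

theorem add_gradient_eq_iff (hP : IsProximalMap φ P) (hφ : ∀ x, HasGradientAt φ (g x) x)
    (hg : IsMonotoneOperator g) {p x : E} : x + g x = p ↔ x = P p := by
  refine ⟨fun hx ↦ hg.antilipschitzWith_id_add.injective ?_, ?_⟩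
  · exact hx.trans (hP.add_gradient_eq (hφ _)).symm
  · rintro rfl
    exact hP.add_gradient_eq (hφ _)

theorem lipschitzWith_one (hP : IsProximalMap φ P) (hφ : ∀ x, HasGradientAt φ (g x) x)
    (hg : IsMonotoneOperator g) : LipschitzWith 1 P :=
  hg.antilipschitzWith_id_add.to_rightInverse fun _ ↦ hP.add_gradient_eq (hφ _)

end IsProximalMap

end InnerProductSpace

theorem isMonotoneOperator_of_monotone {g : ℝ → ℝ} (hg : Monotone g) : IsMonotoneOperator g :=
  fun a b ↦ (hg.monovary monotone_id).sub_mul_sub_nonneg b a |>.trans_eq (mul_comm _ _)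

theorem IsProximalMap.hasDerivAt {φ g P : ℝ → ℝ} {p g' : ℝ} (hP : IsProximalMap φ P)
    (hφ : ∀ x, HasDerivAt φ (g x) x) (hg : Monotone g) (hg' : HasDerivAt g g' (P p)) :
    HasDerivAt P (1 + g')⁻¹ p := by
  have hφ_grad : ∀ x, HasGradientAt φ (g x) x := fun x ↦ (hφ x).hasGradientAt'
  have P_continuous : Continuous P :=
    (hP.lipschitzWith_one hφ_grad (isMonotoneOperator_of_monotone hg)).continuous
  have g'_nonneg : 0 ≤ g' := hg'.deriv ▸ hg.deriv_nonneg
  exact ((hasDerivAt_id (P p)).add hg').of_local_left_inverse P_continuous.continuousAt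
    (by positivity) (.of_forall fun q ↦ hP.add_gradient_eq (hφ_grad (P q)))

theorem sigmoid_mul_sigmoid_neg (t : ℝ) : sigmoid t * sigmoid (-t) = 1 / (2 + 2 * cosh t) := by
  have exp_mul_exp_neg : exp t * exp (-t) = 1 := by rw [← exp_add, add_neg_cancel, exp_zero]
  rw [sigmoid_def, sigmoid_def, neg_neg, ← mul_inv, one_div, cosh_eq]
  congr 1
  linear_combination exp_mul_exp_neg

/-- The logistic loss at the score `x` for the label `y`, which may be any real number. -/
noncomputable def logisticLoss (y x : ℝ) : ℝ :=
  log (1 + exp (-(y * x)))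

theorem hasDerivAt_logisticLoss (y x : ℝ) :
    HasDerivAt (logisticLoss y) (-(y * sigmoid (-(y * x)))) x := by
  have inner_deriv : HasDerivAt (fun x ↦ -(y * x)) (-y) x := (hasDerivAt_const_mul y).neg
  refine ((inner_deriv.exp.const_add 1).log (by positivity)).congr_deriv ?_
  rw [← sigmoid_mul_rexp_neg, sigmoid_def]
  ring

theorem hasDerivAt_neg_mul_sigmoid_neg_mul (y x : ℝ) :
    HasDerivAt (fun x ↦ -(y * sigmoid (-(y * x)))) (y ^ 2 * (1 / (2 + 2 * cosh (y * x)))) x := by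
  have inner_deriv : HasDerivAt (fun x ↦ -(y * x)) (-y) x := (hasDerivAt_const_mul y).neg
  refine (((hasDerivAt_sigmoid _).comp x inner_deriv).const_mul y).neg.congr_deriv ?_
  rw [← sigmoid_mul_sigmoid_neg, ← sigmoid_neg, neg_neg]
  ring

theorem monotone_neg_mul_sigmoid_neg_mul (y : ℝ) :
    Monotone fun x ↦ -(y * sigmoid (-(y * x))) :=
  monotone_of_hasDerivAt_nonneg (hasDerivAt_neg_mul_sigmoid_neg_mul y) fun x ↦ by
    have := cosh_pos (y * x)
    positivity

theorem logistic_loss_prox_general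
    (y γ : ℝ) (hγ : 0 < γ)
    (f : ℝ → ℝ) (hf : ∀ x : ℝ, f x = log (1 + exp (-(y * x))))
    (P : ℝ → ℝ)
    (hP : ∀ p x : ℝ, f (P p) / γ + (P p - p) ^ 2 / 2 ≤ f x / γ + (x - p) ^ 2 / 2) :
    ∀ p : ℝ,
      (P p = p + y / (γ * (1 + exp (y * P p))) ∧
        (∀ x : ℝ, x = p + y / (γ * (1 + exp (y * x))) → x = P p)) ∧
      HasDerivAt P (1 / (1 + (y ^ 2 / γ) * (1 / (2 + 2 * cosh (y * P p))))) p := by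
  intro p
  obtain rfl : f = logisticLoss y := funext hf
  have P_prox : IsProximalMap (fun x ↦ logisticLoss y x / γ) P := fun p x _ ↦ by
    simpa only [mem_ofPred_eq, norm_eq_abs, sq_abs] using hP p x
  have φ_deriv (x : ℝ) := (hasDerivAt_logisticLoss y x).div_const γ
  have φ'_monotone : Monotone fun x ↦ -(y * sigmoid (-(y * x))) / γ :=
    (monotone_neg_mul_sigmoid_neg_mul y).div_const hγ.le
  have φ'_eq (x : ℝ) : -(y * sigmoid (-(y * x))) / γ = -(y / (γ * (1 + exp (y * x)))) := by
    rw [sigmoid_def, neg_neg, ← div_eq_mul_inv, neg_div, div_div, mul_comm γ]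
  have fixed_point_iff (x : ℝ) : x = p + y / (γ * (1 + exp (y * x))) ↔ x = P p := by
    rw [← P_prox.add_gradient_eq_iff (fun x ↦ (φ_deriv x).hasGradientAt')
      (isMonotoneOperator_of_monotone φ'_monotone), φ'_eq, ← sub_eq_add_neg, sub_eq_iff_eq_add]
  refine ⟨⟨(fixed_point_iff _).2 rfl, fun x ↦ (fixed_point_iff x).1⟩, ?_⟩
  refine (P_prox.hasDerivAt φ_deriv φ'_monotone
    ((hasDerivAt_neg_mul_sigmoid_neg_mul y (P p)).div_const γ)).congr_deriv ?_
  rw [mul_div_right_comm, inv_eq_one_div]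

/-- Proximal operator of the logistic loss `f(x) = log(1 + exp(−yx))` for a
label `y ∈ {−1, +1}` and parameter `1/γ`, `γ > 0`. Here `P` is hypothesized to be the
proximal operator, i.e. `P p` minimizes `x ↦ f(x)/γ + (x − p)²/2`. Then (i) `P p` is the
unique solution of the fixed-point equation `x = p + y/(γ(1 + exp(yx)))`, and (ii) `P` is
differentiable with the stated derivative. -/
theorem logistic_loss_prox
    (y γ : ℝ) (hy : y = 1 ∨ y = -1) (hγ : 0 < γ)
    (f : ℝ → ℝ) (hf : ∀ x : ℝ, f x = Real.log (1 + Real.exp (-(y * x))))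
    (P : ℝ → ℝ)
    (hP : ∀ p x : ℝ, f (P p) / γ + (P p - p) ^ 2 / 2 ≤ f x / γ + (x - p) ^ 2 / 2) :
    ∀ p : ℝ,
      (P p = p + y / (γ * (1 + Real.exp (y * P p))) ∧
        (∀ x : ℝ, x = p + y / (γ * (1 + Real.exp (y * x))) → x = P p)) ∧
      HasDerivAt P (1 / (1 + (1 / γ) * (1 / (2 + 2 * Real.cosh (P p))))) p := by
  rcases hy with rfl | rfl <;>
    simpa only [one_mul, neg_one_mul, cosh_neg, neg_sq, one_pow] using
      logistic_loss_prox_general _ γ hγ f hf P hP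
end
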